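/- arXiv:2002.04756 — 2 statements merged into one kernel-verified Lean document; each statement's English description precedes it below -/
import Mathlib

section
/- Let μ be a nonnegative measure on ℝ with finite moments up to order 2t + 2, and let P be a real polynomial with deg P ≤ t and P(0) = 1 such that ∫ Q(λ) P(λ) λ dμ(λ) = 0 for every real polynomial Q with deg Q ≤ t − 1. Then for every real polynomial S with deg S ≤ t and S(0) = 1 one has ∫ S² dμ ≥ ∫ P² dμ; that is, P minimizes ∫ S² dμ over all residual polynomials S of degree at most t. -/
open Polynomial MeasureTheory

/-- Let `μ` be a nonnegative measure on `ℝ` with finite moments up to order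
`2t + 2`, and let `P` be a residual polynomial of degree at most `t`
(`P(0) = 1`) orthogonal, w.r.t. the weight `λ dμ(λ)`, to all polynomials of
degree `< t`. Then `P` minimizes `∫ S² dμ` over all residual polynomials `S`
of degree at most `t`: for any such `S`, `∫ S² dμ ≥ ∫ P² dμ`. -/
theorem residual_orthogonal_minimizes_sq_integral
    (μ : Measure ℝ) (t : ℕ)
    (hmom : ∀ k ≤ 2 * t + 2, Integrable (fun x => x ^ k) μ)
    (P : Polynomial ℝ) (hdeg : P.natDegree ≤ t) (hres : P.eval 0 = 1)
    (horth : ∀ Q : Polynomial ℝ, Q.degree < t →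
      (∫ x, Q.eval x * P.eval x * x ∂μ) = 0) :
    ∀ S : Polynomial ℝ, S.natDegree ≤ t → S.eval 0 = 1 →
      (∫ x, (P.eval x) ^ 2 ∂μ) ≤ ∫ x, (S.eval x) ^ 2 ∂μ := by
  intro S hS hS0
  have hint : ∀ R : Polynomial ℝ, R.natDegree ≤ 2 * t + 2 →
      Integrable (fun x => R.eval x) μ := by
    intro R hR
    simp only [Polynomial.eval_eq_sum_range]
    refine integrable_finsetSum _ fun i hi => ?_
    exact (hmom i (by have := Finset.mem_range.1 hi; omega)).const_mul _
  have hD : (S - P).natDegree ≤ t := (natDegree_sub_le _ _).trans (max_le hS hdeg)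
  have hX : (S - P).divX * X = S - P := by
    have h := divX_mul_X_add (S - P)
    have h0 : (S - P).coeff 0 = 0 := by
      rw [coeff_zero_eq_eval_zero, eval_sub, hS0, hres, sub_self]
    rwa [h0, C_0, add_zero] at h
  have hQ : (S - P).divX.degree < t := by
    by_cases h : S - P = 0
    · rw [h, divX_zero, degree_zero]; exact WithBot.bot_lt_coe _
    · exact (degree_divX_lt h).trans_le (degree_le_of_natDegree_le hD)
  have h1 := horth _ hQ
  have hev : ∀ x, (S - P).divX.eval x * x = S.eval x - P.eval x := by
    intro x
    have := congrArg (eval x) hX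
    simpa only [eval_mul, eval_X, eval_sub] using this
  have hi1 : Integrable (fun x => (P.eval x) ^ 2) μ := by
    have := hint (P ^ 2) (natDegree_pow_le.trans (by omega))
    simpa only [eval_pow] using this
  have hi2 : Integrable (fun x => ((S - P).eval x) ^ 2) μ := by
    have := hint ((S - P) ^ 2) (natDegree_pow_le.trans (by omega))
    simpa only [eval_pow] using this
  have hi3 : Integrable (fun x => (S - P).divX.eval x * P.eval x * x) μ := by
    have := hint ((S - P) * P) (natDegree_mul_le.trans (by omega))
    refine this.congr (Filter.Eventually.of_forall fun x => ?_)
    simp only [eval_mul, eval_sub]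
    rw [← hev x]; ring
  have heq : (fun x => (S.eval x) ^ 2) = fun x => ((P.eval x) ^ 2 + ((S - P).eval x) ^ 2)
      + 2 * ((S - P).divX.eval x * P.eval x * x) := by
    funext x
    have := hev x
    rw [eval_sub]
    linear_combination (-2 * P.eval x) * this
  have hi4 : Integrable (fun x => (P.eval x) ^ 2 + ((S - P).eval x) ^ 2) μ := hi1.add hi2
  rw [heq, integral_add hi4 (hi3.const_mul 2), integral_add hi1 hi2,
    integral_const_mul, h1]
  have : 0 ≤ ∫ x, ((S - P).eval x) ^ 2 ∂μ := integral_nonneg fun x => sq_nonneg _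
  linarith
end

section
/- Let r > 0 and σ > 0, and set ℓ = σ²(1 − √r)² and L = σ²(1 + √r)². Then ∫_ℓ^L √((L − λ)(λ − ℓ))/(2πσ²λ) dλ = min(r, 1). Consequently, the Marchenko–Pastur measure, defined as the point mass of weight max(1 − r, 0) at 0 plus the density √((L − λ)(λ − ℓ))/(2πσ²λ) on [ℓ, L], is a probability measure. -/
open MeasureTheory

/-- The Marchenko–Pastur measure with ratio `r > 0` and scale `σ > 0`: a point
mass of weight `max (1 − r) 0` at `0` plus the density
`√((L − λ)(λ − ℓ))/(2πσ²λ)` on `[ℓ, L]`, where `ℓ = σ²(1 − √r)²` and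
`L = σ²(1 + √r)²`. -/
noncomputable def mpMeasure (r σ : ℝ) : Measure ℝ :=
  (ENNReal.ofReal (max (1 - r) 0)) • Measure.dirac 0 +
    (volume.restrict
        (Set.Icc (σ ^ 2 * (1 - Real.sqrt r) ^ 2) (σ ^ 2 * (1 + Real.sqrt r) ^ 2))).withDensity
      (fun x => ENNReal.ofReal
        (Real.sqrt ((σ ^ 2 * (1 + Real.sqrt r) ^ 2 - x) * (x - σ ^ 2 * (1 - Real.sqrt r) ^ 2))
          / (2 * Real.pi * σ ^ 2 * x)))

lemma mp_third (a b x : ℝ) (ha : 0 ≤ a) (hax : a < x) (hxb : x < b) :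
    HasDerivAt (fun x => Real.sqrt (a * b) * Real.arcsin (((a + b) * x - 2 * a * b) / ((b - a) * x)))
      (a * b / (x * Real.sqrt ((b - x) * (x - a)))) x := by
  rcases ha.eq_or_lt with h0 | h0
  · subst h0
    simpa using hasDerivAt_const x (0 : ℝ)
  have hx : 0 < x := h0.trans hax
  have hb : 0 < b := hx.trans hxb
  have hba : 0 < b - a := by linarith
  have hp : 0 < (b - x) * (x - a) := mul_pos (by linarith) (by linarith)
  have hs := Real.sqrt_pos.2 hp
  have hs2 := Real.sq_sqrt hp.le
  have hc := Real.sqrt_pos.2 (mul_pos h0 hb)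
  have hc2 := Real.sq_sqrt (mul_pos h0 hb).le
  set s := Real.sqrt ((b - x) * (x - a)) with hsdef
  set c := Real.sqrt (a * b) with hcdef
  set v := ((a + b) * x - 2 * a * b) / ((b - a) * x) with hv
  have hv1 : 1 - v ^ 2 = (2 * c * s / ((b - a) * x)) ^ 2 := by
    rw [hv, div_pow, div_pow, mul_pow (b - a), mul_pow (2 * c), mul_pow 2 c, hs2, hc2]
    field_simp
    ring
  have hpos : 0 < 2 * c * s / ((b - a) * x) := by positivity
  have hlt : 0 < 1 - v ^ 2 := by rw [hv1]; positivity
  have hd : HasDerivAt (fun x : ℝ => ((a + b) * x - 2 * a * b) / ((b - a) * x))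
      (2 * a * b / ((b - a) * x ^ 2)) x := by
    have h1 : HasDerivAt (fun x : ℝ => (a + b) * x - 2 * a * b) (a + b) x := by
      simpa using ((hasDerivAt_id x).const_mul (a + b)).sub_const (2 * a * b)
    have h2 : HasDerivAt (fun x : ℝ => (b - a) * x) (b - a) x := by
      simpa using ((hasDerivAt_id x).const_mul (b - a))
    refine (h1.div h2 (by positivity)).congr_deriv ?_
    field_simp
    ring
  have hA := Real.hasDerivAt_arcsin (x := v) (by rintro h; rw [h] at hlt; norm_num at hlt)
    (by rintro h; rw [h] at hlt; norm_num at hlt)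
  refine ((HasDerivAt.comp x hA hd).const_mul c).congr_deriv ?_
  rw [hv1, Real.sqrt_sq hpos.le]
  field_simp

lemma mp_second (a b x : ℝ) (hax : a < x) (hxb : x < b) :
    HasDerivAt (fun x => Real.arcsin ((2 * x - a - b) / (b - a)))
      (1 / Real.sqrt ((b - x) * (x - a))) x := by
  have hba : 0 < b - a := by linarith
  have hp : 0 < (b - x) * (x - a) := mul_pos (by linarith) (by linarith)
  have hs := Real.sqrt_pos.2 hp
  have hs2 := Real.sq_sqrt hp.le
  set s := Real.sqrt ((b - x) * (x - a)) with hsdef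
  set v := (2 * x - a - b) / (b - a) with hv
  have hv1 : 1 - v ^ 2 = (2 * s / (b - a)) ^ 2 := by
    rw [hv, div_pow, div_pow, mul_pow, hs2]
    field_simp
    ring
  have hpos : 0 < 2 * s / (b - a) := by positivity
  have hlt : 0 < 1 - v ^ 2 := by rw [hv1]; positivity
  have hd : HasDerivAt (fun x : ℝ => (2 * x - a - b) / (b - a)) (2 / (b - a)) x := by
    simpa using ((((hasDerivAt_id x).const_mul 2).sub_const a).sub_const b).div_const (b - a)
  have hA := Real.hasDerivAt_arcsin (x := v) (by rintro h; rw [h] at hlt; norm_num at hlt)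
    (by rintro h; rw [h] at hlt; norm_num at hlt)
  refine (HasDerivAt.comp x hA hd).congr_deriv ?_
  rw [hv1, Real.sqrt_sq hpos.le]
  field_simp

lemma mp_first (a b x : ℝ) (hax : a < x) (hxb : x < b) :
    HasDerivAt (fun x => Real.sqrt ((b - x) * (x - a)))
      ((a + b - 2 * x) / (2 * Real.sqrt ((b - x) * (x - a)))) x := by
  have hp : 0 < (b - x) * (x - a) := mul_pos (by linarith) (by linarith)
  have h1 : HasDerivAt (fun x : ℝ => (b - x) * (x - a)) (a + b - 2 * x) x := by
    refine (((hasDerivAt_id x).const_sub b).mul ((hasDerivAt_id x).sub_const a)).congr_deriv ?_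
    simp
    ring
  exact h1.sqrt hp.ne'

lemma mp_integral (a b : ℝ) (ha : 0 ≤ a) (hab : a < b) :
    IntervalIntegrable (fun x => Real.sqrt ((b - x) * (x - a)) / x) volume a b ∧
    ∫ x in a..b, Real.sqrt ((b - x) * (x - a)) / x
      = Real.pi * ((a + b) / 2 - Real.sqrt (a * b)) := by
  have hba : 0 < b - a := by linarith
  let F : ℝ → ℝ := fun x => Real.sqrt ((b - x) * (x - a))
    + (a + b) / 2 * Real.arcsin ((2 * x - a - b) / (b - a))
    - Real.sqrt (a * b) * Real.arcsin (((a + b) * x - 2 * a * b) / ((b - a) * x))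
  have hder : ∀ x ∈ Set.Ioo a b, HasDerivAt F (Real.sqrt ((b - x) * (x - a)) / x) x := by
    rintro x ⟨h1, h2⟩
    have hp : 0 < (b - x) * (x - a) := mul_pos (by linarith) (by linarith)
    have hs := Real.sqrt_pos.2 hp
    have hs2 := Real.sq_sqrt hp.le
    have hx : 0 < x := by linarith
    refine HasDerivAt.congr_deriv (((mp_first a b x h1 h2).add ((mp_second a b x h1 h2).const_mul ((a + b) / 2))).sub
      (mp_third a b x ha h1 h2)) ?_
    field_simp
    rw [hs2]
    ring
  have hcont : ContinuousOn F (Set.Icc a b) := by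
    refine ContinuousOn.sub (by fun_prop) ?_
    rcases ha.eq_or_lt with h0 | h0
    · subst h0
      simpa using continuousOn_const
    · refine continuousOn_const.mul (Real.continuous_arcsin.comp_continuousOn ?_)
      refine ContinuousOn.div (by fun_prop) (by fun_prop) ?_
      rintro x ⟨h1, h2⟩
      have : 0 < x := by linarith
      positivity
  have hint : IntervalIntegrable (fun x => Real.sqrt ((b - x) * (x - a)) / x) volume a b := by
    rw [intervalIntegrable_iff_integrableOn_Ioc_of_le hab.le]
    refine intervalIntegral.integrableOn_deriv_of_nonneg hcont hder ?_
    rintro x ⟨h1, h2⟩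
    have : 0 < x := by linarith
    positivity
  refine ⟨hint, ?_⟩
  rw [intervalIntegral.integral_eq_sub_of_hasDerivAt_of_le hab.le hcont hder hint]
  have e1 : (2 * b - a - b) / (b - a) = 1 := by field_simp; ring
  have e2 : (2 * a - a - b) / (b - a) = -1 := by field_simp; ring
  simp only [F, e1, e2]
  rcases ha.eq_or_lt with h0 | h0
  · subst h0
    simp
    ring
  · have hb : 0 < b := by linarith
    have e3 : ((a + b) * b - 2 * a * b) / ((b - a) * b) = 1 := by field_simp; ring
    have e4 : ((a + b) * a - 2 * a * b) / ((b - a) * a) = -1 := by field_simp; ring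
    rw [e3, e4]
    simp
    ring

theorem mpMeasure_isProbabilityMeasure (r σ : ℝ) (hr : 0 < r) (hσ : 0 < σ)
    (ℓ L : ℝ) (hℓ : ℓ = σ ^ 2 * (1 - Real.sqrt r) ^ 2)
    (hL : L = σ ^ 2 * (1 + Real.sqrt r) ^ 2) :
    (∫ x in ℓ..L, Real.sqrt ((L - x) * (x - ℓ)) / (2 * Real.pi * σ ^ 2 * x)) = min r 1 ∧
    IsProbabilityMeasure (mpMeasure r σ) := by
  have hq := Real.sqrt_pos.2 hr
  have hq2 := Real.sq_sqrt hr.le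
  have hl0 : 0 ≤ ℓ := by rw [hℓ]; positivity
  have hlL : ℓ < L := by
    have : 0 < σ ^ 2 * Real.sqrt r := by positivity
    rw [hℓ, hL]; nlinarith
  have hpi := Real.pi_pos
  obtain ⟨hI, hE⟩ := mp_integral ℓ L hl0 hlL
  have hfun : (fun x => Real.sqrt ((L - x) * (x - ℓ)) / (2 * Real.pi * σ ^ 2 * x)) =
      fun x => (2 * Real.pi * σ ^ 2)⁻¹ * (Real.sqrt ((L - x) * (x - ℓ)) / x) := by
    funext x
    rw [div_mul_eq_div_div_swap, div_eq_inv_mul]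
  have hI' : IntervalIntegrable
      (fun x => Real.sqrt ((L - x) * (x - ℓ)) / (2 * Real.pi * σ ^ 2 * x)) volume ℓ L := by
    rw [hfun]; exact hI.const_mul _
  have hsq : Real.sqrt (ℓ * L) = σ ^ 2 * |1 - r| := by
    have : ℓ * L = (σ ^ 2 * (1 - r)) ^ 2 := by
      rw [hℓ, hL]
      calc _ = (σ ^ 2 * (1 - Real.sqrt r ^ 2)) ^ 2 := by ring
        _ = _ := by rw [hq2]
    rw [this, Real.sqrt_sq_eq_abs, abs_mul, abs_of_pos (by positivity : 0 < σ ^ 2)]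
  have hsum : (ℓ + L) / 2 = σ ^ 2 * (1 + r) := by
    rw [hℓ, hL]
    calc _ = σ ^ 2 * (1 + Real.sqrt r ^ 2) := by ring
      _ = _ := by rw [hq2]
  have key : (∫ x in ℓ..L, Real.sqrt ((L - x) * (x - ℓ)) / (2 * Real.pi * σ ^ 2 * x))
      = min r 1 := by
    rw [hfun, intervalIntegral.integral_const_mul, hE, hsq, hsum]
    rcases le_total r 1 with h | h
    · rw [min_eq_left h, abs_of_nonneg (by linarith)]
      field_simp
      ring
    · rw [min_eq_right h, abs_of_nonpos (by linarith)]
      field_simp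
      ring
  refine ⟨key, ⟨?_⟩⟩
  unfold mpMeasure
  rw [← hℓ, ← hL]
  rw [Measure.add_apply, Measure.smul_apply, withDensity_apply _ MeasurableSet.univ,
    Measure.restrict_univ]
  rw [← ofReal_integral_eq_lintegral_ofReal]
  · rw [integral_Icc_eq_integral_Ioc, ← intervalIntegral.integral_of_le hlL.le, key]
    simp only [measure_univ, smul_eq_mul, mul_one]
    rw [← ENNReal.ofReal_add (le_max_right _ _) (le_min hr.le zero_le_one)]
    rw [← ENNReal.ofReal_one]
    congr 1
    rcases le_total r 1 with h | h
    · rw [min_eq_left h, max_eq_left (by linarith)]; ring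
    · rw [min_eq_right h, max_eq_right (by linarith)]; ring
  · exact (integrableOn_Icc_iff_integrableOn_Ioc).2
      ((intervalIntegrable_iff_integrableOn_Ioc_of_le hlL.le).1 hI')
  · filter_upwards [ae_restrict_mem measurableSet_Icc] with x hx
    have : 0 ≤ x := hl0.trans hx.1
    simp only [Pi.zero_apply]
    positivity
end
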